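/- (Falk–Bruch inequality) Let H and A be Hermitian matrices of the same finite size with A ≠ 0, let β > 0, and let ⟨·⟩ be the Gibbs expectation of H at inverse temperature β. Then ⟨A²⟩ > 0, the Gibbs expectation of the double commutator ⟨[A,[βH,A]]⟩ is a non-negative real number, and ⟨A|A⟩ ≥ ⟨A²⟩ · Φ( ⟨[A,[βH,A]]⟩ / (4⟨A²⟩) ), where ⟨A|A⟩ is the Duhamel–Kubo–Bogolyubov product of A with itself. -/

import Mathlib

open Matrix

noncomputable section

/-- Complex-valued Gibbs expectation `⟨A⟩ = Tr(e^{-βH} A)/Tr(e^{-βH})`. -/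
def gibbsC {n : Type*} [Fintype n] [DecidableEq n] (β : ℝ) (H A : Matrix n n ℂ) : ℂ :=
  (NormedSpace.exp ((-β) • H) * A).trace / (NormedSpace.exp ((-β) • H)).trace

/-- Real-valued Gibbs expectation (real part; for Hermitian observables this is `⟨A⟩`). -/
def gibbs {n : Type*} [Fintype n] [DecidableEq n] (β : ℝ) (H A : Matrix n n ℂ) : ℝ :=
  (gibbsC β H A).re

/-- Complex-valued Duhamel–Kubo–Bogolyubov product
`⟨A|B⟩ = ∫_0^1 ⟨e^{tβH} A* e^{-tβH} B⟩ dt`. -/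
def duhamelC {n : Type*} [Fintype n] [DecidableEq n] (β : ℝ) (H A B : Matrix n n ℂ) : ℂ :=
  ∫ t in (0:ℝ)..1,
    gibbsC β H (NormedSpace.exp ((t * β) • H) * Aᴴ *
      NormedSpace.exp ((-(t * β)) • H) * B)

/-- Real-valued Duhamel–Kubo–Bogolyubov product. -/
def duhamel {n : Type*} [Fintype n] [DecidableEq n] (β : ℝ) (H A B : Matrix n n ℂ) : ℝ :=
  (duhamelC β H A B).re

/-!
In an eigenbasis of `H` with energies `E i` and Gibbs weights `p i`, the observable `A` gives each
pair of levels the weight `w = (p i + p j) / 2 * |A i j| ^ 2` and the half gap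
`r = β * (E j - E i) / 2`. Since `p i - p j = (p i + p j) * tanh r`, the three Gibbs quantities are
sums over the pairs: `⟨A²⟩ = ∑ w`, `⟨[A,[βH,A]]⟩ = 4 ∑ w * (r * tanh r)` and
`⟨A|A⟩ = ∑ w * (tanh r / r) = ∑ w * Φ (r * tanh r)`. The inequality is therefore Jensen's inequality
for `Φ`, whose convexity holds because the slope of its parametrization
`r ↦ (r * tanh r, tanh r / r)` is increasing.

For a general matrix `A` the symmetrization `(⟨A A*⟩ + ⟨A* A⟩) / 2` plays the role of `⟨A²⟩`.
-/

section ParametricConvexity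

open Set

theorem exists_slope_eq_deriv_div_deriv {x y x' y' : ℝ → ℝ} {a b : ℝ} (hab : a < b)
    (hx : ContinuousOn x (Icc a b)) (hx' : ∀ t ∈ Ioo a b, HasDerivAt x (x' t) t)
    (hy : ContinuousOn y (Icc a b)) (hy' : ∀ t ∈ Ioo a b, HasDerivAt y (y' t) t)
    (hpos : ∀ t ∈ Ioo a b, 0 < x' t) :
    ∃ c ∈ Ioo a b, (y b - y a) / (x b - x a) = y' c / x' c := by
  obtain ⟨c, hc, h⟩ := exists_ratio_hasDerivAt_eq_ratio_slope y y' hab hy hy' x x' hx hx'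
  have hmono : StrictMonoOn x (Icc a b) :=
    strictMonoOn_of_hasDerivWithinAt_pos (convex_Icc a b) hx
      (by simpa only [interior_Icc] using fun t ht ↦ (hx' t ht).hasDerivWithinAt)
      (by simpa only [interior_Icc] using hpos)
  have hlt : x a < x b := hmono (left_mem_Icc.2 hab.le) (right_mem_Icc.2 hab.le) hab
  refine ⟨c, hc, ?_⟩
  rw [div_eq_div_iff (sub_pos.2 hlt).ne' (hpos c hc).ne', ← h, mul_comm]

theorem convexOn_image_of_monotoneOn_deriv_div_deriv {D : Set ℝ} (hD : Convex ℝ D)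
    {x y x' y' f : ℝ → ℝ}
    (hx : ContinuousOn x D) (hx' : ∀ t ∈ interior D, HasDerivAt x (x' t) t)
    (hy : ContinuousOn y D) (hy' : ∀ t ∈ interior D, HasDerivAt y (y' t) t)
    (hpos : ∀ t ∈ interior D, 0 < x' t)
    (hmono : MonotoneOn (fun t ↦ y' t / x' t) (interior D)) (hf : ∀ t ∈ D, f (x t) = y t) :
    ConvexOn ℝ (x '' D) f := by
  have hxmono : StrictMonoOn x D := strictMonoOn_of_hasDerivWithinAt_pos hD hx
    (fun t ht ↦ (hx' t ht).hasDerivWithinAt) hpos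
  have himage : Convex ℝ (x '' D) := (hD.isPreconnected.image x hx).convex
  have hslope {a b : ℝ} (ha : a ∈ D) (hb : b ∈ D) (hab : a < b) :
      ∃ c ∈ Ioo a b ∩ interior D, (f (x b) - f (x a)) / (x b - x a) = y' c / x' c := by
    have hIcc : Icc a b ⊆ D := hD.ordConnected.out ha hb
    have hIoo : Ioo a b ⊆ interior D := interior_Icc (a := a) ▸ interior_mono hIcc
    obtain ⟨c, hc, h⟩ := exists_slope_eq_deriv_div_deriv hab (hx.mono hIcc)
      (fun t ht ↦ hx' t (hIoo ht)) (hy.mono hIcc) (fun t ht ↦ hy' t (hIoo ht))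
      (fun t ht ↦ hpos t (hIoo ht))
    exact ⟨c, ⟨hc, hIoo hc⟩, by rw [hf a ha, hf b hb, h]⟩
  refine convexOn_of_slope_mono_adjacent himage fun {u v w} hu hw huv hvw ↦ ?_
  have hv : v ∈ x '' D := himage.ordConnected.out hu hw ⟨huv.le, hvw.le⟩
  obtain ⟨⟨a, ha, rfl⟩, ⟨b, hb, rfl⟩, ⟨c, hc, rfl⟩⟩ := hu, hv, hw
  obtain ⟨p, ⟨hpab, hpD⟩, hp⟩ := hslope ha hb ((hxmono.lt_iff_lt ha hb).1 huv)
  obtain ⟨q, ⟨hqbc, hqD⟩, hq⟩ := hslope hb hc ((hxmono.lt_iff_lt hb hc).1 hvw)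
  rw [hp, hq]
  exact hmono hpD hqD (hpab.2.trans hqbc.1).le

end ParametricConvexity

section Hyperbolic

open Set Filter Real

theorem hasDerivAt_tanh (x : ℝ) : HasDerivAt tanh (1 / cosh x ^ 2) x := by
  have h := (hasDerivAt_sinh x).div (hasDerivAt_cosh x) (cosh_pos x).ne'
  rw [← sq, ← sq, cosh_sq_sub_sinh_sq] at h
  exact h.congr_of_eventuallyEq (.of_forall tanh_eq_sinh_div_cosh)

theorem continuous_tanh : Continuous tanh :=
  continuous_iff_continuousAt.2 fun x ↦ (hasDerivAt_tanh x).continuousAt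

theorem mul_tanh_nonneg (r : ℝ) : 0 ≤ r * tanh r := by
  rw [tanh_eq_sinh_div_cosh, mul_div_assoc']
  refine div_nonneg ?_ (cosh_pos r).le
  rcases le_total 0 r with hr | hr
  · exact mul_nonneg hr (sinh_nonneg_iff.2 hr)
  · exact mul_nonneg_of_nonpos_of_nonpos hr (sinh_nonpos_iff.2 hr)

theorem sub_one_le_mul_tanh {r : ℝ} (hr : 0 ≤ r) : r - 1 ≤ r * tanh r := by
  have hsinh : r ≤ sinh r := self_le_sinh_iff.2 hr
  have hsq : cosh r ^ 2 = sinh r ^ 2 + 1 := cosh_sq r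
  rw [tanh_eq_sinh_div_cosh, mul_div_assoc', le_div_iff₀ (cosh_pos r)]
  nlinarith [sinh_lt_cosh r, one_le_cosh r]

theorem image_mul_tanh_Ici : (fun r ↦ r * tanh r) '' Ici 0 = Ici 0 := by
  refine Subset.antisymm (image_subset_iff.2 fun r _ ↦ mul_tanh_nonneg r) ?_
  have htop : Tendsto (fun r ↦ r * tanh r) atTop atTop :=
    tendsto_atTop_mono' _ ((eventually_ge_atTop 0).mono fun _ ↦ sub_one_le_mul_tanh)
      (tendsto_atTop_add_const_right _ (-1) tendsto_id)
  have hcont : Continuous fun r ↦ r * tanh r := continuous_id.mul continuous_tanh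
  simpa only [zero_mul] using isPreconnected_Ici.intermediate_value_Ici self_mem_Ici
    (le_principal_iff.2 (Ici_mem_atTop 0)) hcont.continuousOn htop

theorem le_of_hasDerivAt_nonneg {f f' : ℝ → ℝ} {a b : ℝ} (hf : ∀ x, HasDerivAt f (f' x) x)
    (hf' : ∀ x, a < x → 0 ≤ f' x) (hab : a ≤ b) : f a ≤ f b :=
  monotoneOn_of_hasDerivWithinAt_nonneg (convex_Ici a)
    (fun x _ ↦ (hf x).continuousAt.continuousWithinAt) (fun x _ ↦ (hf x).hasDerivWithinAt)
    (fun x hx ↦ hf' x (by rwa [interior_Ici] at hx)) self_mem_Ici hab hab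

theorem mul_cosh_add_sq_mul_sinh_le {r : ℝ} (hr : 0 ≤ r) :
    3 * r * cosh r + 2 * r ^ 2 * sinh r ≤ 3 * sinh r ^ 3 + 3 * sinh r := by
  have hderiv (x : ℝ) : HasDerivAt
      (fun x ↦ 3 * sinh x ^ 3 + 3 * sinh x - (3 * x * cosh x + 2 * x ^ 2 * sinh x))
      (7 * sinh x * (sinh x * cosh x - x) + 2 * cosh x * (sinh x ^ 2 - x ^ 2)) x := by
    have h := ((((hasDerivAt_sinh x).pow 3).const_mul 3).add ((hasDerivAt_sinh x).const_mul 3)).sub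
      ((((hasDerivAt_id' x).const_mul 3).mul (hasDerivAt_cosh x)).add
        ((((hasDerivAt_id' x).pow 2).const_mul 2).mul (hasDerivAt_sinh x)))
    refine h.congr_deriv ?_
    simp only [Pi.pow_apply, Nat.cast_ofNat]
    ring
  have h := le_of_hasDerivAt_nonneg hderiv (fun x hx ↦ ?_) hr
  · simpa using h
  · have hsinh : x ≤ sinh x := self_le_sinh_iff.2 hx.le
    have hcosh : 1 ≤ cosh x := one_le_cosh x
    have hprod : x ≤ sinh x * cosh x := by nlinarith
    have hsq : x ^ 2 ≤ sinh x ^ 2 := by gcongr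
    have := mul_nonneg (hx.le.trans hsinh) (sub_nonneg.2 hprod)
    have := mul_nonneg (zero_le_one.trans hcosh) (sub_nonneg.2 hsq)
    linarith

theorem two_mul_sq_mul_cosh_le {r : ℝ} (hr : 0 ≤ r) :
    2 * r ^ 2 * cosh r ≤ sinh r ^ 2 * cosh r + r * sinh r := by
  have hderiv (x : ℝ) : HasDerivAt
      (fun x ↦ sinh x ^ 2 * cosh x + x * sinh x - 2 * x ^ 2 * cosh x)
      (3 * sinh x ^ 3 + 3 * sinh x - (3 * x * cosh x + 2 * x ^ 2 * sinh x)) x := by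
    have h := ((((hasDerivAt_sinh x).pow 2).mul (hasDerivAt_cosh x)).add
      ((hasDerivAt_id' x).mul (hasDerivAt_sinh x))).sub
      ((((hasDerivAt_id' x).pow 2).const_mul 2).mul (hasDerivAt_cosh x))
    refine h.congr_deriv ?_
    simp only [Pi.pow_apply, Nat.cast_ofNat]
    linear_combination 2 * sinh x * cosh_sq x
  have h := le_of_hasDerivAt_nonneg hderiv
    (fun x hx ↦ sub_nonneg.2 (mul_cosh_add_sq_mul_sinh_le hx.le)) hr
  simpa using h

/-- The continuous extension of `tanh r / r` by the value `1` at `r = 0`; the analogue of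
`Real.sinc` for `tanh`. -/
def tanhc (r : ℝ) : ℝ := if r = 0 then 1 else tanh r / r

theorem tanhc_zero : tanhc 0 = 1 := if_pos rfl

theorem tanhc_of_ne_zero {r : ℝ} (hr : r ≠ 0) : tanhc r = tanh r / r := if_neg hr

theorem tanhc_eq_dslope : tanhc = dslope tanh 0 := by
  ext r
  simp [tanhc, dslope, Function.update_apply, slope, div_eq_inv_mul, (hasDerivAt_tanh 0).deriv]

theorem continuous_tanhc : Continuous tanhc := by
  rw [tanhc_eq_dslope, ← continuousOn_univ, continuousOn_dslope univ_mem]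
  exact ⟨continuous_tanh.continuousOn, (hasDerivAt_tanh 0).differentiableAt⟩

theorem hasDerivAt_tanhc {r : ℝ} (hr : r ≠ 0) :
    HasDerivAt tanhc ((r - sinh r * cosh r) / (r ^ 2 * cosh r ^ 2)) r := by
  have h := ((hasDerivAt_tanh r).div (hasDerivAt_id' r) hr).congr_of_eventuallyEq
    ((eventually_ne_nhds hr).mono fun _ ↦ tanhc_of_ne_zero)
  refine h.congr_deriv ?_
  rw [tanh_eq_sinh_div_cosh]
  field_simp

theorem hasDerivAt_mul_tanh (r : ℝ) :
    HasDerivAt (fun r ↦ r * tanh r) ((sinh r * cosh r + r) / cosh r ^ 2) r := by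
  refine ((hasDerivAt_id' r).mul (hasDerivAt_tanh r)).congr_deriv ?_
  rw [tanh_eq_sinh_div_cosh]
  field_simp

-- The quotient is the slope of the curve `r ↦ (r * tanh r, tanhc r)`, i.e. of the graph of `Φ`.
theorem monotoneOn_sub_sinh_mul_cosh_div :
    MonotoneOn (fun r ↦ (r - sinh r * cosh r) / (r ^ 2 * (sinh r * cosh r + r))) (Ioi 0) := by
  have hderiv {r : ℝ} (hr : 0 < r) :
      HasDerivAt (fun r ↦ (r - sinh r * cosh r) / (r ^ 2 * (sinh r * cosh r + r)))
        (2 * r * cosh r * (sinh r ^ 2 * cosh r + r * sinh r - 2 * r ^ 2 * cosh r)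
          / (r ^ 2 * (sinh r * cosh r + r)) ^ 2) r := by
    have hsinh : 0 < sinh r := sinh_pos_iff.2 hr
    have hprod := (hasDerivAt_sinh r).mul (hasDerivAt_cosh r)
    have h := ((hasDerivAt_id' r).sub hprod).div
      (((hasDerivAt_id' r).pow 2).mul (hprod.add (hasDerivAt_id' r)))
      (mul_pos (pow_pos hr 2) (add_pos (mul_pos hsinh (cosh_pos r)) hr)).ne'
    refine h.congr_deriv ?_
    simp only [Pi.mul_apply, Pi.pow_apply, Pi.add_apply, Pi.sub_apply, Nat.cast_ofNat]
    congr 1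
    linear_combination 2 * r ^ 3 * cosh_sq r
  refine monotoneOn_of_hasDerivWithinAt_nonneg (convex_Ioi 0)
    (fun r hr ↦ (hderiv hr).continuousAt.continuousWithinAt)
    (fun r hr ↦ (hderiv (interior_subset hr)).hasDerivWithinAt) fun r hr ↦ ?_
  have hr : 0 ≤ r := (interior_subset hr).le
  exact div_nonneg (mul_nonneg (mul_nonneg (mul_nonneg zero_le_two hr) (cosh_pos r).le)
    (sub_nonneg.2 (two_mul_sq_mul_cosh_le hr))) (sq_nonneg _)

theorem convexOn_of_apply_mul_tanh_eq {Φ : ℝ → ℝ} (hΦ : ∀ r, Φ (r * tanh r) = tanhc r) :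
    ConvexOn ℝ (Ici 0) Φ := by
  rw [← image_mul_tanh_Ici]
  refine convexOn_image_of_monotoneOn_deriv_div_deriv (convex_Ici 0)
    (continuous_id.mul continuous_tanh).continuousOn (fun r _ ↦ hasDerivAt_mul_tanh r)
    continuous_tanhc.continuousOn (y' := fun r ↦ (r - sinh r * cosh r) / (r ^ 2 * cosh r ^ 2))
    ?_ ?_ ?_ (fun r _ ↦ hΦ r)
  all_goals simp only [interior_Ici]
  · exact fun r hr ↦ hasDerivAt_tanhc (ne_of_gt hr)
  · intro r hr
    exact div_pos (add_pos (mul_pos (sinh_pos_iff.2 hr) (cosh_pos r)) hr) (pow_pos (cosh_pos r) 2)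
  · refine monotoneOn_sub_sinh_mul_cosh_div.congr fun r _ ↦ ?_
    have := (cosh_pos r).ne'
    field_simp

theorem apply_mul_tanh_eq_tanhc {Φ : ℝ → ℝ} (hΦ : ∀ r, 0 < r → Φ (r * tanh r) = tanh r / r)
    (hΦ0 : Φ 0 = 1) (r : ℝ) : Φ (r * tanh r) = tanhc r := by
  rcases lt_trichotomy r 0 with hr | rfl | hr
  · have h := hΦ (-r) (neg_pos.2 hr)
    rwa [tanh_neg, neg_mul_neg, neg_div_neg_eq, ← tanhc_of_ne_zero hr.ne] at h
  · rw [zero_mul, hΦ0, tanhc_zero]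
  · rw [hΦ r hr, tanhc_of_ne_zero hr.ne']

theorem sum_mul_apply_div_le_sum_mul_tanhc {Φ : ℝ → ℝ} (hΦ : ∀ r, Φ (r * tanh r) = tanhc r)
    {ι : Type*} {s : Finset ι} {w : ι → ℝ} (hw : ∀ i ∈ s, 0 ≤ w i) (hpos : 0 < ∑ i ∈ s, w i)
    (r : ι → ℝ) :
    (∑ i ∈ s, w i) * Φ ((∑ i ∈ s, w i * (r i * tanh (r i))) / ∑ i ∈ s, w i) ≤
      ∑ i ∈ s, w i * tanhc (r i) := by
  have h := (convexOn_of_apply_mul_tanh_eq hΦ).map_centerMass_le hw hpos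
    fun i _ ↦ mul_tanh_nonneg (r i)
  simp only [Finset.centerMass, smul_eq_mul, Function.comp_apply, hΦ, inv_mul_eq_div] at h
  rwa [le_div_iff₀' hpos] at h

theorem exp_add_exp_mul_tanh (a b : ℝ) :
    (exp a + exp b) * tanh ((b - a) / 2) = exp b - exp a := by
  have ha : exp a = exp ((a + b) / 2) * exp (-((b - a) / 2)) := by rw [← exp_add]; ring_nf
  have hb : exp b = exp ((a + b) / 2) * exp ((b - a) / 2) := by rw [← exp_add]; ring_nf
  rw [tanh_eq, ha, hb]
  field_simp
  ring

theorem integral_exp_add_mul (a b : ℝ) :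
    ∫ t in (0 : ℝ)..1, exp (a + (b - a) * t) =
      (exp a + exp b) / 2 * tanhc ((b - a) / 2) := by
  rcases eq_or_ne a b with rfl | hab
  · simp [tanhc_zero]
  · have hne : b - a ≠ 0 := sub_ne_zero.2 hab.symm
    rw [intervalIntegral.integral_comp_add_mul _ hne, integral_exp,
      tanhc_of_ne_zero (div_ne_zero hne two_ne_zero)]
    simp only [mul_zero, add_zero, mul_one, add_sub_cancel, smul_eq_mul]
    rw [← exp_add_exp_mul_tanh]
    field_simp

end Hyperbolic

section UnitaryInvariance

variable {n : Type*} [Fintype n] [DecidableEq n]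

open Unitary

theorem exp_conjStarAlgAut (U : unitary (Matrix n n ℂ)) (A : Matrix n n ℂ) :
    NormedSpace.exp (conjStarAlgAut ℂ _ U A) = conjStarAlgAut ℂ _ U (NormedSpace.exp A) :=
  Matrix.exp_units_conj (toUnits U) A

theorem trace_conjStarAlgAut (U : unitary (Matrix n n ℂ)) (A : Matrix n n ℂ) :
    (conjStarAlgAut ℂ _ U A).trace = A.trace :=
  Matrix.trace_units_conj (toUnits U) A

theorem gibbsC_conjStarAlgAut (β : ℝ) (U : unitary (Matrix n n ℂ)) (H A : Matrix n n ℂ) :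
    gibbsC β (conjStarAlgAut ℂ _ U H) (conjStarAlgAut ℂ _ U A) = gibbsC β H A := by
  simp only [gibbsC, ← Complex.coe_smul, ← map_smul, exp_conjStarAlgAut, ← map_mul,
    trace_conjStarAlgAut]

theorem duhamelC_conjStarAlgAut (β : ℝ) (U : unitary (Matrix n n ℂ)) (H A B : Matrix n n ℂ) :
    duhamelC β (conjStarAlgAut ℂ _ U H) (conjStarAlgAut ℂ _ U A) (conjStarAlgAut ℂ _ U B) =
      duhamelC β H A B := by
  simp only [duhamelC, ← star_eq_conjTranspose, ← Complex.coe_smul, ← map_smul, ← map_star,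
    exp_conjStarAlgAut, ← map_mul, gibbsC_conjStarAlgAut]

theorem exists_eq_conjStarAlgAut_diagonal {H : Matrix n n ℂ} (hH : H.IsHermitian) :
    ∃ (U : unitary (Matrix n n ℂ)) (E : n → ℝ),
      H = conjStarAlgAut ℂ _ U (diagonal fun i ↦ (E i : ℂ)) :=
  ⟨hH.eigenvectorUnitary, hH.eigenvalues, hH.spectral_theorem⟩

end UnitaryInvariance

section SpectralRepresentation

variable {n : Type*}

/-- Half the energy difference between the levels `x.2` and `x.1`, in units of the temperature; it
is the parameter `r` at which `Φ (r * tanh r)` is evaluated. -/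
def halfGap (β : ℝ) (E : n → ℝ) (x : n × n) : ℝ := β * (E x.2 - E x.1) / 2

theorem conjTranspose_apply_mul_apply (A : Matrix n n ℂ) (i j : n) :
    Aᴴ j i * A i j = (‖A i j‖ ^ 2 : ℝ) := by
  rw [conjTranspose_apply, Complex.star_def, Complex.conj_mul', Complex.ofReal_pow]

variable [Fintype n]

/-- The probability of the energy level `E i` in the Gibbs state at inverse temperature `β`. -/
def gibbsWeight (β : ℝ) (E : n → ℝ) (i : n) : ℝ :=
  Real.exp (-β * E i) / ∑ j, Real.exp (-β * E j)

/-- The weight that the transition from level `x.1` to level `x.2` induced by `A` carries in the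
spectral measure of `A`: the squared matrix element times the mean of the two Gibbs weights. -/
def transitionWeight (β : ℝ) (E : n → ℝ) (A : Matrix n n ℂ) (x : n × n) : ℝ :=
  (gibbsWeight β E x.1 + gibbsWeight β E x.2) / 2 * ‖A x.1 x.2‖ ^ 2

theorem gibbsWeight_pos (β : ℝ) (E : n → ℝ) (i : n) : 0 < gibbsWeight β E i :=
  div_pos (Real.exp_pos _) (Finset.sum_pos (fun _ _ ↦ Real.exp_pos _) ⟨i, Finset.mem_univ i⟩)

theorem transitionWeight_nonneg (β : ℝ) (E : n → ℝ) (A : Matrix n n ℂ) (x : n × n) :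
    0 ≤ transitionWeight β E A x :=
  mul_nonneg (half_pos (add_pos (gibbsWeight_pos β E x.1) (gibbsWeight_pos β E x.2))).le
    (sq_nonneg _)

theorem sum_transitionWeight_pos (β : ℝ) (E : n → ℝ) {A : Matrix n n ℂ} (hA : A ≠ 0) :
    0 < ∑ x, transitionWeight β E A x := by
  obtain ⟨i, j, hij⟩ : ∃ i j, A i j ≠ 0 := by
    by_contra! h
    exact hA (Matrix.ext h)
  refine Finset.sum_pos' (fun x _ ↦ transitionWeight_nonneg β E A x)
    ⟨(i, j), Finset.mem_univ _, ?_⟩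
  exact mul_pos (half_pos (add_pos (gibbsWeight_pos β E i) (gibbsWeight_pos β E j)))
    (pow_pos (norm_pos_iff.2 hij) 2)

theorem gibbsWeight_add_mul_tanh_halfGap (β : ℝ) (E : n → ℝ) (x : n × n) :
    (gibbsWeight β E x.1 + gibbsWeight β E x.2) * Real.tanh (halfGap β E x) =
      gibbsWeight β E x.1 - gibbsWeight β E x.2 := by
  have h := exp_add_exp_mul_tanh (-β * E x.2) (-β * E x.1)
  rw [show (-β * E x.1 - -β * E x.2) / 2 = halfGap β E x by rw [halfGap]; ring] at h
  rw [gibbsWeight, gibbsWeight, ← add_div, ← sub_div, ← h]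
  ring

theorem integral_gibbsWeight_mul_exp (β : ℝ) (E : n → ℝ) (x : n × n) :
    ∫ t in (0 : ℝ)..1, gibbsWeight β E x.2 * Real.exp (t * β * (E x.2 - E x.1)) =
      (gibbsWeight β E x.1 + gibbsWeight β E x.2) / 2 * tanhc (halfGap β E x) := by
  have hexp (t : ℝ) : gibbsWeight β E x.2 * Real.exp (t * β * (E x.2 - E x.1)) =
      Real.exp (-β * E x.2 + (-β * E x.1 - -β * E x.2) * t) / ∑ j, Real.exp (-β * E j) := by
    rw [gibbsWeight, div_mul_eq_mul_div, ← Real.exp_add]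
    ring_nf
  simp only [hexp, intervalIntegral.integral_div, integral_exp_add_mul]
  rw [show (-β * E x.1 - -β * E x.2) / 2 = halfGap β E x by rw [halfGap]; ring, gibbsWeight,
    gibbsWeight]
  ring

variable [DecidableEq n]

theorem exp_smul_diagonal_ofReal (t : ℝ) (E : n → ℝ) :
    NormedSpace.exp (t • (diagonal fun i ↦ (E i : ℂ))) =
      diagonal fun i ↦ (Real.exp (t * E i) : ℂ) := by
  rw [← Matrix.diagonal_smul, Matrix.exp_diagonal, Pi.exp_def]
  simp [← Complex.exp_eq_exp_ℂ]

theorem gibbsC_diagonal (β : ℝ) (E : n → ℝ) (A : Matrix n n ℂ) :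
    gibbsC β (diagonal fun i ↦ (E i : ℂ)) A = ∑ i, gibbsWeight β E i * A i i := by
  rw [gibbsC, exp_smul_diagonal_ofReal, trace_diagonal]
  simp only [trace, diag_apply, diagonal_mul, Finset.sum_div, gibbsWeight]
  push_cast
  exact Finset.sum_congr rfl fun i _ ↦ mul_div_right_comm _ _ _

theorem gibbsC_diagonal_mul (β : ℝ) (E : n → ℝ) (A B : Matrix n n ℂ) :
    gibbsC β (diagonal fun i ↦ (E i : ℂ)) (A * B) =
      ∑ x : n × n, gibbsWeight β E x.1 * (A x.1 x.2 * B x.2 x.1) := by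
  simp only [gibbsC_diagonal, Matrix.mul_apply, Finset.mul_sum, Fintype.sum_prod_type]

theorem gibbsC_diagonal_mul' (β : ℝ) (E : n → ℝ) (A B : Matrix n n ℂ) :
    gibbsC β (diagonal fun i ↦ (E i : ℂ)) (A * B) =
      ∑ x : n × n, gibbsWeight β E x.2 * (A x.2 x.1 * B x.1 x.2) := by
  rw [gibbsC_diagonal_mul]
  exact Fintype.sum_equiv (Equiv.prodComm n n) _ _ fun _ ↦ rfl

theorem gibbs_diagonal_mul_conjTranspose_add (β : ℝ) (E : n → ℝ) (A : Matrix n n ℂ) :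
    (gibbs β (diagonal fun i ↦ (E i : ℂ)) (A * Aᴴ) +
      gibbs β (diagonal fun i ↦ (E i : ℂ)) (Aᴴ * A)) / 2 = ∑ x, transitionWeight β E A x := by
  simp only [gibbs, gibbsC_diagonal_mul β E A, gibbsC_diagonal_mul' β E Aᴴ, mul_comm (A _ _),
    conjTranspose_apply_mul_apply, ← Complex.ofReal_mul, ← Complex.ofReal_sum, Complex.ofReal_re,
    ← Finset.sum_add_distrib, Finset.sum_div, transitionWeight]
  exact Finset.sum_congr rfl fun x _ ↦ by ring

theorem gibbsC_diagonal_lie (β : ℝ) (E : n → ℝ) (A B : Matrix n n ℂ) :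
    gibbsC β (diagonal fun i ↦ (E i : ℂ)) ⁅A, B⁆ = ∑ x : n × n,
      (gibbsWeight β E x.2 - gibbsWeight β E x.1) * (A x.2 x.1 * B x.1 x.2) := by
  have hsub : gibbsC β (diagonal fun i ↦ (E i : ℂ)) ⁅A, B⁆ =
      gibbsC β (diagonal fun i ↦ (E i : ℂ)) (A * B) -
        gibbsC β (diagonal fun i ↦ (E i : ℂ)) (B * A) := by
    rw [Ring.lie_def, gibbsC, mul_sub, trace_sub, sub_div, gibbsC, gibbsC]
  rw [hsub, gibbsC_diagonal_mul' β E A, gibbsC_diagonal_mul β E B, ← Finset.sum_sub_distrib]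
  exact Finset.sum_congr rfl fun x _ ↦ by ring

theorem lie_smul_diagonal_apply (β : ℝ) (E : n → ℝ) (A : Matrix n n ℂ) (x : n × n) :
    ⁅β • (diagonal fun i ↦ (E i : ℂ)), A⁆ x.1 x.2 = -2 * halfGap β E x * A x.1 x.2 := by
  rw [Ring.lie_def, smul_mul_assoc, mul_smul_comm, ← smul_sub, Matrix.smul_apply, Matrix.sub_apply,
    diagonal_mul, mul_diagonal, Complex.real_smul, halfGap]
  push_cast
  ring

theorem gibbsC_diagonal_lie_conjTranspose_lie (β : ℝ) (E : n → ℝ) (A : Matrix n n ℂ) :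
    gibbsC β (diagonal fun i ↦ (E i : ℂ)) ⁅Aᴴ, ⁅β • (diagonal fun i ↦ (E i : ℂ)), A⁆⁆ =
      (4 * ∑ x, transitionWeight β E A x * (halfGap β E x * Real.tanh (halfGap β E x)) : ℝ) := by
  rw [gibbsC_diagonal_lie, Finset.mul_sum, Complex.ofReal_sum]
  refine Finset.sum_congr rfl fun x _ ↦ ?_
  have hweight : 4 * (transitionWeight β E A x * (halfGap β E x * Real.tanh (halfGap β E x))) =
      (gibbsWeight β E x.1 - gibbsWeight β E x.2) * (2 * halfGap β E x) * ‖A x.1 x.2‖ ^ 2 := by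
    rw [← gibbsWeight_add_mul_tanh_halfGap, transitionWeight]
    ring
  rw [hweight, lie_smul_diagonal_apply, Complex.ofReal_mul, ← conjTranspose_apply_mul_apply]
  push_cast
  ring

theorem gibbsC_diagonal_duhamel (β t : ℝ) (E : n → ℝ) (A : Matrix n n ℂ) :
    gibbsC β (diagonal fun i ↦ (E i : ℂ))
        (NormedSpace.exp ((t * β) • (diagonal fun i ↦ (E i : ℂ))) * Aᴴ *
          NormedSpace.exp ((-(t * β)) • (diagonal fun i ↦ (E i : ℂ))) * A) =
      (∑ x : n × n, gibbsWeight β E x.2 * Real.exp (t * β * (E x.2 - E x.1)) *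
        ‖A x.1 x.2‖ ^ 2 : ℝ) := by
  rw [gibbsC_diagonal_mul', exp_smul_diagonal_ofReal, exp_smul_diagonal_ofReal, Complex.ofReal_sum]
  refine Finset.sum_congr rfl fun x _ ↦ ?_
  rw [mul_diagonal, diagonal_mul, mul_sub, sub_eq_add_neg, ← neg_mul (t * β), Real.exp_add,
    Complex.ofReal_mul, ← conjTranspose_apply_mul_apply]
  simp only [Complex.ofReal_mul]
  ring

theorem duhamel_diagonal_self (β : ℝ) (E : n → ℝ) (A : Matrix n n ℂ) :
    duhamel β (diagonal fun i ↦ (E i : ℂ)) A A =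
      ∑ x, transitionWeight β E A x * tanhc (halfGap β E x) := by
  simp only [duhamel, duhamelC, gibbsC_diagonal_duhamel]
  rw [intervalIntegral.integral_ofReal, Complex.ofReal_re, intervalIntegral.integral_finsetSum
    fun x _ ↦ Continuous.intervalIntegrable (by fun_prop) _ _]
  refine Finset.sum_congr rfl fun x _ ↦ ?_
  rw [intervalIntegral.integral_mul_const, integral_gibbsWeight_mul_exp, transitionWeight]
  ring

open Unitary in
theorem exists_eq_sum_transitionWeight (β : ℝ) {H A : Matrix n n ℂ} (hH : H.IsHermitian)
    (hA : A ≠ 0) :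
    ∃ (E : n → ℝ) (B : Matrix n n ℂ), B ≠ 0 ∧
      (gibbs β H (A * Aᴴ) + gibbs β H (Aᴴ * A)) / 2 = ∑ x, transitionWeight β E B x ∧
      gibbsC β H ⁅Aᴴ, ⁅β • H, A⁆⁆ =
        (4 * ∑ x, transitionWeight β E B x * (halfGap β E x * Real.tanh (halfGap β E x)) : ℝ) ∧
      duhamel β H A A = ∑ x, transitionWeight β E B x * tanhc (halfGap β E x) := by
  obtain ⟨U, E, rfl⟩ := exists_eq_conjStarAlgAut_diagonal hH
  obtain ⟨B, rfl⟩ := EquivLike.surjective (conjStarAlgAut ℂ (Matrix n n ℂ) U) A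
  refine ⟨E, B, fun hB ↦ hA (by rw [hB, map_zero]), ?_, ?_, ?_⟩
  · rw [← gibbs_diagonal_mul_conjTranspose_add]
    simp only [gibbs, ← star_eq_conjTranspose, ← map_star, ← map_mul, gibbsC_conjStarAlgAut]
  · rw [← gibbsC_diagonal_lie_conjTranspose_lie]
    simp only [Ring.lie_def, ← star_eq_conjTranspose, ← Complex.coe_smul, ← map_smul, ← map_star,
      ← map_mul, ← map_sub, gibbsC_conjStarAlgAut]
  · rw [duhamel, duhamelC_conjStarAlgAut, ← duhamel, duhamel_diagonal_self]

end SpectralRepresentation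

theorem stmt4_general {n : Type*} [Fintype n] [DecidableEq n] (β : ℝ) (H A : Matrix n n ℂ)
    (hH : H.IsHermitian) (hA0 : A ≠ 0)
    (Φ : ℝ → ℝ) (hΦ : ∀ r : ℝ, 0 < r → Φ (r * Real.tanh r) = Real.tanh r / r)
    (hΦ0 : Φ 0 = 1) :
    0 < (gibbs β H (A * Aᴴ) + gibbs β H (Aᴴ * A)) / 2 ∧
    (gibbsC β H ⁅Aᴴ, ⁅β • H, A⁆⁆).im = 0 ∧ 0 ≤ (gibbsC β H ⁅Aᴴ, ⁅β • H, A⁆⁆).re ∧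
    duhamel β H A A ≥
      (gibbs β H (A * Aᴴ) + gibbs β H (Aᴴ * A)) / 2 *
        Φ (gibbs β H ⁅Aᴴ, ⁅β • H, A⁆⁆ /
          (4 * ((gibbs β H (A * Aᴴ) + gibbs β H (Aᴴ * A)) / 2))) := by
  obtain ⟨E, B, hB, hsq, hlie, hduhamel⟩ := exists_eq_sum_transitionWeight β hH hA0
  have hpos := sum_transitionWeight_pos β E hB
  rw [hsq, gibbs, hlie, hduhamel, Complex.ofReal_im, Complex.ofReal_re,
    mul_div_mul_left _ _ four_ne_zero]
  refine ⟨hpos, rfl, mul_nonneg zero_le_four (Finset.sum_nonneg fun x _ ↦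
    mul_nonneg (transitionWeight_nonneg β E B x) (mul_tanh_nonneg _)), ?_⟩
  exact sum_mul_apply_div_le_sum_mul_tanhc (apply_mul_tanh_eq_tanhc hΦ hΦ0)
    (fun x _ ↦ transitionWeight_nonneg β E B x) hpos (halfGap β E)

theorem stmt4 {n : Type*} [Fintype n] [DecidableEq n] [Nonempty n]
    (β : ℝ) (hβ : 0 < β) (H A : Matrix n n ℂ)
    (hH : H.IsHermitian) (hA : A.IsHermitian) (hA0 : A ≠ 0)
    (Φ : ℝ → ℝ) (hΦ : ∀ r : ℝ, 0 < r → Φ (r * Real.tanh r) = Real.tanh r / r)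
    (hΦ0 : Φ 0 = 1) :
    0 < gibbs β H (A * A) ∧
    (gibbsC β H ⁅A, ⁅β • H, A⁆⁆).im = 0 ∧ 0 ≤ (gibbsC β H ⁅A, ⁅β • H, A⁆⁆).re ∧
    duhamel β H A A ≥
      gibbs β H (A * A) * Φ (gibbs β H ⁅A, ⁅β • H, A⁆⁆ / (4 * gibbs β H (A * A))) := by
  simpa only [hA.eq, add_self_div_two] using stmt4_general β H A hH hA0 Φ hΦ hΦ0
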